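/- Let X be a compact, connected, locally connected metric space and let x ∈ X. Then every connected component C of X ∖ {x} is open in X and is arcwise connected. -/

import Mathlib

/-!
In a locally connected complete metric space, two nearby points are joined by a step function whose
jumps are bridged by small connected open sets. Inside each of these sets the step function is
refined by one with geometrically smaller jumps; the limit of the refinements is a path. The space
is therefore locally path connected, and every connected component of an open subset is open and
path connected.

A path `f` is straightened into an arc in two steps. Zorn's lemma gives a minimal closed set `A` of
times such that `f` takes equal values at the two ends of each gap of `A`. Freezing `f` during the
gaps gives a continuous map `g`, and minimality forbids `f` to take a value twice on `A` except at
the two ends of a gap, so the fibres of `g` are intervals. A Whitney map on the initial segments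
`g '' Iic t` is then constant exactly on these fibres, and using it as the parameter makes `g`
injective.
-/

open Function Set Topology

/-- `x` and `y` are joined by an arc (a continuous injective path) lying in `S`. -/
def JoinedByArcIn {X : Type*} [TopologicalSpace X] (S : Set X) (x y : X) : Prop :=
  ∃ γ : unitInterval → X, Continuous γ ∧ Function.Injective γ ∧
    γ 0 = x ∧ γ 1 = y ∧ Set.range γ ⊆ S

open Filter unitInterval

section Links

variable {X : Type*} [PseudoMetricSpace X] {ε : ℝ} {a b : X}

/-- The points `a` and `b` lie in a common connected open set in which all distances are less
than `ε`. Local connectedness enters the construction of paths only through this relation. -/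
def Linked (ε : ℝ) (a b : X) : Prop :=
  ∃ V : Set X, IsOpen V ∧ IsPreconnected V ∧ a ∈ V ∧ b ∈ V ∧ ∀ x ∈ V, ∀ y ∈ V, dist x y < ε

theorem Linked.refl_left (h : Linked ε a b) : Linked ε a a :=
  let ⟨V, hVo, hVc, ha, _, hV⟩ := h
  ⟨V, hVo, hVc, ha, ha, hV⟩

theorem Linked.symm (h : Linked ε a b) : Linked ε b a :=
  let ⟨V, hVo, hVc, ha, hb, hV⟩ := h
  ⟨V, hVo, hVc, hb, ha, hV⟩

theorem Linked.dist_lt (h : Linked ε a b) : dist a b < ε :=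
  let ⟨_, _, _, ha, hb, hV⟩ := h
  hV a ha b hb

theorem eventually_linked [LocallyConnectedSpace X] (hε : 0 < ε) (a : X) :
    ∀ᶠ b in 𝓝 a, Linked ε a b := by
  obtain ⟨V, hVball, hVo, haV, hVc⟩ := locallyConnectedSpace_iff_subsets_isOpen_isConnected.1
    inferInstance a (Metric.ball a (ε / 2)) (Metric.ball_mem_nhds a (half_pos hε))
  filter_upwards [hVo.mem_nhds haV] with b hb
  refine ⟨V, hVo, hVc.isPreconnected, haV, hb, fun x hx y hy => ?_⟩
  calc dist x y ≤ dist x a + dist y a := dist_triangle_right x y a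
    _ < ε / 2 + ε / 2 := add_lt_add (hVball hx) (hVball hy)
    _ = ε := add_halves ε

theorem linked_self [LocallyConnectedSpace X] (hε : 0 < ε) (a : X) : Linked ε a a :=
  (eventually_linked hε a).self_of_nhds

/-- A possibly discontinuous counterpart of `ContinuousOn`: near each point of `S`, the values of
`f` are linked at scale `ε` to the value at that point. Step functions along chains of connected
open sets have this property. -/
def LinkedOn {α : Type*} [TopologicalSpace α] (ε : ℝ) (f : α → X) (S : Set α) : Prop :=
  ∀ u ∈ S, ∀ᶠ v in 𝓝[S] u, Linked ε (f u) (f v)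

namespace LinkedOn

section TopologicalSpace

variable {α : Type*} [TopologicalSpace α] {f g : α → X} {S T : Set α}

theorem of_forall (h : ∀ u v, Linked ε (f u) (f v)) : LinkedOn ε f S :=
  fun u _ => Eventually.of_forall (h u)

theorem congr (hf : LinkedOn ε f S) (h : EqOn g f S) : LinkedOn ε g S := by
  intro u hu
  filter_upwards [hf u hu, self_mem_nhdsWithin] with v hv hvS
  rwa [h hu, h hvS]

theorem union (hfS : LinkedOn ε f S) (hfT : LinkedOn ε f T) (hS : IsClosed S) (hT : IsClosed T) :
    LinkedOn ε f (S ∪ T) := by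
  have eventually_within {R : Set α} (hf : LinkedOn ε f R) (hR : IsClosed R) (u : α) :
      ∀ᶠ v in 𝓝[R] u, Linked ε (f u) (f v) := by
    by_cases hu : u ∈ R
    · exact hf u hu
    · rw [notMem_closure_iff_nhdsWithin_eq_bot.1 (hR.closure_eq.symm ▸ hu)]
      exact eventually_bot
  intro u _
  rw [nhdsWithin_union, eventually_sup]
  exact ⟨eventually_within hfS hS u, eventually_within hfT hT u⟩

end TopologicalSpace

variable {α : Type*} [LinearOrder α] [TopologicalSpace α] [OrderClosedTopology α] {s m t : α}

theorem exists_glue {f g : α → X} (hf : LinkedOn ε f (Icc s m)) (hg : LinkedOn ε g (Icc m t))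
    (h : f m = g m) (hsm : s ≤ m) (hmt : m ≤ t) :
    ∃ k, LinkedOn ε k (Icc s t) ∧ EqOn k f (Icc s m) ∧ EqOn k g (Icc m t) := by
  have hkf : EqOn (fun u => if u ≤ m then f u else g u) f (Icc s m) :=
    fun u hu => if_pos hu.2
  have hkg : EqOn (fun u => if u ≤ m then f u else g u) g (Icc m t) := by
    intro u hu
    rcases hu.1.eq_or_lt with rfl | hmu
    · simpa using h
    · exact if_neg hmu.not_ge
  refine ⟨_, ?_, hkf, hkg⟩
  rw [← Icc_union_Icc_eq_Icc hsm hmt]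
  exact (hf.congr hkf).union (hg.congr hkg) isClosed_Icc isClosed_Icc

end LinkedOn

theorem exists_linkedOn_Icc_of_isPreconnected {α : Type*} [LinearOrder α] [DenselyOrdered α]
    [TopologicalSpace α] [OrderClosedTopology α] [LocallyConnectedSpace X] {V : Set X}
    (hVo : IsOpen V) (hVc : IsPreconnected V) (ha : a ∈ V) (hb : b ∈ V) (hε : 0 < ε) {s t : α}
    (hst : s < t) :
    ∃ g : α → X, LinkedOn ε g (Icc s t) ∧ g s = a ∧ g t = b ∧ MapsTo g (Icc s t) V := by
  let StepJoined (x y : X) : Prop := ∀ s t : α, s < t →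
    ∃ g : α → X, LinkedOn ε g (Icc s t) ∧ g s = x ∧ g t = y ∧ MapsTo g (Icc s t) V
  have stepJoined_of_linked {x y : X} (hx : x ∈ V) (hy : y ∈ V) (h : Linked ε x y) :
      StepJoined x y := by
    intro s t hst
    refine ⟨fun u => if u ≤ s then x else y, .of_forall fun u v => ?_, if_pos le_rfl,
      if_neg hst.not_ge, fun u _ => ?_⟩
    · split_ifs
      exacts [h.refl_left, h, h.symm, h.symm.refl_left]
    · dsimp only
      split_ifs
      exacts [hx, hy]
  have stepJoined_trans (x y z : X) (hxy : StepJoined x y) (hyz : StepJoined y z) :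
      StepJoined x z := by
    intro s t hst
    obtain ⟨m, hsm, hmt⟩ := exists_between hst
    obtain ⟨g₁, hg₁, hs, hm₁, hV₁⟩ := hxy s m hsm
    obtain ⟨g₂, hg₂, hm₂, ht, hV₂⟩ := hyz m t hmt
    obtain ⟨g, hg, hgg₁, hgg₂⟩ := hg₁.exists_glue hg₂ (hm₁.trans hm₂.symm) hsm.le hmt.le
    refine ⟨g, hg, (hgg₁ (left_mem_Icc.2 hsm.le)).trans hs,
      (hgg₂ (right_mem_Icc.2 hmt.le)).trans ht, ?_⟩
    rw [← Icc_union_Icc_eq_Icc hsm.le hmt.le]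
    exact (hV₁.congr hgg₁.symm).union (hV₂.congr hgg₂.symm)
  refine hVc.induction₂' StepJoined (fun x hx => ?_)
    (fun x y z _ _ _ => stepJoined_trans x y z) ha hb s t hst
  filter_upwards [mem_nhdsWithin_of_mem_nhds (hVo.mem_nhds hx),
    mem_nhdsWithin_of_mem_nhds (eventually_linked hε x)] with y hy hxy
  exact ⟨stepJoined_of_linked hx hy hxy, stepJoined_of_linked hy hx hxy.symm⟩

theorem exists_linkedOn_Icc_of_forall_linked {α : Type*} [LinearOrder α] [DenselyOrdered α]
    [TopologicalSpace α] [OrderClosedTopology α] [LocallyConnectedSpace X] {δ : ℝ} (hδ : 0 < δ)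
    {f : α → X} {s t : α} (hst : s ≤ t) (h : ∀ u ∈ Icc s t, Linked ε a (f u)) :
    ∃ g : α → X, LinkedOn δ g (Icc s t) ∧ g s = f s ∧ g t = f t ∧
      ∀ u ∈ Icc s t, dist (f u) (g u) < 2 * ε := by
  obtain ⟨V, hVo, hVc, haV, hsV, hV⟩ := h s (left_mem_Icc.2 hst)
  obtain ⟨W, hWo, hWc, haW, htW, hW⟩ := h t (right_mem_Icc.2 hst)
  have dist_lt (x : X) (hx : x ∈ V ∪ W) (u : α) (hu : u ∈ Icc s t) : dist (f u) x < 2 * ε := by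
    have hax : dist a x < ε := hx.elim (hV a haV x) (hW a haW x)
    calc dist (f u) x ≤ dist a (f u) + dist a x := dist_triangle_left (f u) x a
      _ < 2 * ε := by linarith [(h u hu).dist_lt]
  rcases hst.eq_or_lt with rfl | hst
  · exact ⟨fun _ => f s, .of_forall fun _ _ => linked_self hδ _, rfl, rfl,
      dist_lt _ (.inl hsV)⟩
  · obtain ⟨g, hg, hgs, hgt, hgVW⟩ := exists_linkedOn_Icc_of_isPreconnected (hVo.union hWo)
      (hVc.union a haV haW hWc) (.inl hsV) (.inr htW) hδ hst
    exact ⟨g, hg, hgs, hgt, fun u hu => dist_lt _ (hgVW hu) u hu⟩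

theorem LinkedOn.exists_refinement [LocallyConnectedSpace X] {f : I → X}
    (hf : LinkedOn ε f univ) {δ : ℝ} (hδ : 0 < δ) :
    ∃ g : I → X, LinkedOn δ g univ ∧ g 0 = f 0 ∧ g 1 = f 1 ∧ ∀ u, dist (f u) (g u) < 2 * ε := by
  obtain ⟨τ, hτ0, hτ, ⟨N, hN⟩, hτcover⟩ := exists_monotone_Icc_subset_open_cover_unitInterval
    (c := fun u => interior {v | Linked ε (f u) (f v)}) (fun _ => isOpen_interior) fun u _ =>
      mem_iUnion.2 ⟨u, mem_interior_iff_mem_nhds.2 (nhdsWithin_univ u ▸ hf u (mem_univ u))⟩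
  have exists_on_initial (n : ℕ) : ∃ g : I → X, LinkedOn δ g (Icc 0 (τ n)) ∧ g 0 = f 0 ∧
      g (τ n) = f (τ n) ∧ ∀ u ∈ Icc 0 (τ n), dist (f u) (g u) < 2 * ε := by
    induction n with
    | zero =>
      rw [hτ0]
      exact exists_linkedOn_Icc_of_forall_linked (a := f 0) hδ le_rfl fun u hu => by
        obtain rfl : u = 0 := by simpa using hu
        exact (hf _ (mem_univ _)).self_of_nhdsWithin (mem_univ _)
    | succ n ih =>
      obtain ⟨g₁, hg₁, h0, hn₁, hd₁⟩ := ih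
      obtain ⟨u, hu⟩ := hτcover n
      have hn : τ n ≤ τ (n + 1) := hτ n.le_succ
      obtain ⟨g₂, hg₂, hn₂, hn', hd₂⟩ :=
        exists_linkedOn_Icc_of_forall_linked (a := f u) (f := f) hδ hn
          fun v hv => interior_subset (s := {v | Linked ε (f u) (f v)}) (hu hv)
      obtain ⟨g, hg, hgg₁, hgg₂⟩ := hg₁.exists_glue hg₂ (hn₁.trans hn₂.symm) nonneg' hn
      refine ⟨g, hg, (hgg₁ (left_mem_Icc.2 nonneg')).trans h0,
        (hgg₂ (right_mem_Icc.2 hn)).trans hn', fun v hv => ?_⟩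
      rcases le_total v (τ n) with hvn | hnv
      · rw [hgg₁ ⟨hv.1, hvn⟩]
        exact hd₁ v ⟨hv.1, hvn⟩
      · rw [hgg₂ ⟨hnv, hv.2⟩]
        exact hd₂ v ⟨hnv, hv.2⟩
  have univ_eq : Icc 0 (τ N) = univ := by
    rw [hN N le_rfl]
    exact Icc_bot_top
  obtain ⟨g, hg, h0, h1, hd⟩ := exists_on_initial N
  rw [univ_eq] at hg hd
  rw [hN N le_rfl] at h1
  exact ⟨g, hg, h0, h1, fun u => hd u (mem_univ u)⟩

theorem Linked.exists_seq_linkedOn [LocallyConnectedSpace X] (h : Linked ε a b) :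
    ∃ F : ℕ → I → X, (∀ u, dist a (F 0 u) < ε) ∧ ∀ n, LinkedOn (ε / 2 ^ n) (F n) univ ∧
      F n 0 = a ∧ F n 1 = b ∧ ∀ u, dist (F n u) (F (n + 1) u) < 2 * (ε / 2 ^ n) := by
  have hε : 0 < ε := dist_nonneg.trans_lt h.dist_lt
  have exists_next (n : ℕ) (f : I → X) : ∃ g : I → X, LinkedOn (ε / 2 ^ n) f univ →
      LinkedOn (ε / 2 ^ (n + 1)) g univ ∧ g 0 = f 0 ∧ g 1 = f 1 ∧
        ∀ u, dist (f u) (g u) < 2 * (ε / 2 ^ n) := by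
    by_cases hf : LinkedOn (ε / 2 ^ n) f univ
    · obtain ⟨g, hg⟩ := hf.exists_refinement (δ := ε / 2 ^ (n + 1)) (by positivity)
      exact ⟨g, fun _ => hg⟩
    · exact ⟨f, fun h => (hf h).elim⟩
  choose next hnext using exists_next
  let F : ℕ → I → X := Nat.rec (fun u => if u = 0 then a else b) next
  have hF (n : ℕ) : LinkedOn (ε / 2 ^ n) (F n) univ ∧ F n 0 = a ∧ F n 1 = b := by
    induction n with
    | zero =>
      refine ⟨.of_forall fun u v => ?_, if_pos rfl, if_neg one_ne_zero⟩
      rw [pow_zero, div_one]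
      change Linked ε (if u = 0 then a else b) (if v = 0 then a else b)
      split_ifs
      exacts [h.refl_left, h, h.symm, h.symm.refl_left]
    | succ n ih =>
      obtain ⟨hn, h0, h1⟩ := ih
      obtain ⟨hn', h0', h1', -⟩ := hnext n (F n) hn
      exact ⟨hn', h0'.trans h0, h1'.trans h1⟩
  refine ⟨F, fun u => ?_, fun n =>
    ⟨(hF n).1, (hF n).2.1, (hF n).2.2, (hnext n (F n) (hF n).1).2.2.2⟩⟩
  change dist a (if u = 0 then a else b) < ε
  split_ifs
  exacts [h.refl_left.dist_lt, h.dist_lt]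

end Links

theorem continuous_of_uniform_approx_of_eventually_dist_lt {α X : Type*} [TopologicalSpace α]
    [PseudoMetricSpace X] {f : α → X}
    (h : ∀ ε > 0, ∃ F : α → X, (∀ u, ∀ᶠ v in 𝓝 u, dist (F u) (F v) < ε) ∧
      ∀ u, dist (F u) (f u) < ε) : Continuous f := by
  refine Metric.continuous_iff'.2 fun u ε hε => ?_
  obtain ⟨F, hF, hFf⟩ := h (ε / 3) (by positivity)
  filter_upwards [hF u] with v hv
  calc dist (f v) (f u) ≤ dist (f v) (F v) + dist (F v) (F u) + dist (F u) (f u) :=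
        dist_triangle4 _ _ _ _
    _ < ε / 3 + ε / 3 + ε / 3 := by
        rw [dist_comm (f v), dist_comm (F v) (F u)]
        exact add_lt_add (add_lt_add (hFf v) hv) (hFf u)
    _ = ε := by ring

theorem Linked.joinedIn_closedBall {X : Type*} [MetricSpace X] [CompleteSpace X]
    [LocallyConnectedSpace X] {ε : ℝ} {a b : X} (h : Linked ε a b) :
    JoinedIn (Metric.closedBall a (5 * ε)) a b := by
  have hε : 0 < ε := dist_nonneg.trans_lt h.dist_lt
  obtain ⟨F, hF0, hF⟩ := h.exists_seq_linkedOn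
  have dist_succ_le (u : I) (n : ℕ) : dist (F n u) (F (n + 1) u) ≤ 4 * ε / 2 / 2 ^ n :=
    ((hF n).2.2.2 u).le.trans_eq (by ring)
  choose f hf using fun u =>
    cauchySeq_tendsto_of_complete (cauchySeq_of_le_geometric_two (dist_succ_le u))
  have dist_le (n : ℕ) (u : I) : dist (F n u) (f u) ≤ 4 * ε / 2 ^ n :=
    dist_le_of_le_geometric_two_of_tendsto (dist_succ_le u) (hf u) n
  have hfc : Continuous f := by
    refine continuous_of_uniform_approx_of_eventually_dist_lt fun η hη => ?_
    obtain ⟨n, hn⟩ : ∃ n : ℕ, 4 * ε / 2 ^ n < η :=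
      ((tendsto_const_nhds.div_atTop (tendsto_pow_atTop_atTop_of_one_lt one_lt_two)
        ).eventually_lt_const hη).exists
    refine ⟨F n, fun u => ?_, fun u => (dist_le n u).trans_lt hn⟩
    filter_upwards [nhdsWithin_univ u ▸ (hF n).1 u (mem_univ u)] with v hv
    calc dist (F n u) (F n v) < ε / 2 ^ n := hv.dist_lt
      _ ≤ 4 * ε / 2 ^ n := by gcongr; linarith
      _ < η := hn
  refine ⟨⟨⟨f, hfc⟩, ?_, ?_⟩, fun u => ?_⟩
  · exact tendsto_nhds_unique (hf 0) (by simp only [(hF _).2.1, tendsto_const_nhds])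
  · exact tendsto_nhds_unique (hf 1) (by simp only [(hF _).2.2.1, tendsto_const_nhds])
  · rw [Metric.mem_closedBall']
    calc dist a (f u) ≤ dist a (F 0 u) + dist (F 0 u) (f u) := dist_triangle _ _ _
      _ ≤ ε + 4 * ε / 2 ^ 0 := add_le_add (hF0 u).le (dist_le 0 u)
      _ = 5 * ε := by ring

theorem locallyPathConnectedSpace_of_isCompletelyMetrizableSpace {X : Type*} [TopologicalSpace X]
    [TopologicalSpace.IsCompletelyMetrizableSpace X] [LocallyConnectedSpace X] :
    LocallyPathConnectedSpace X := by
  let := TopologicalSpace.upgradeIsCompletelyMetrizable X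
  refine locallyPathConnectedSpace_iff_pathComponentIn_mem_nhds.2 fun x U hU hx => ?_
  obtain ⟨ε, hε, hεU⟩ := Metric.nhds_basis_closedBall.mem_iff.1 (hU.mem_nhds hx)
  filter_upwards [eventually_linked (ε := ε / 5) (by positivity) x] with y hy
  exact hy.joinedIn_closedBall.mono (by rwa [mul_div_cancel₀ ε (by norm_num : (5 : ℝ) ≠ 0)])

section Shortcuts

variable {α X : Type*} [TopologicalSpace α]

theorem exists_gap_of_inter_Icc_subset_union [LinearOrder α] [OrderClosedTopology α]
    [CompactIccSpace α] {A U V : Set α} {s t : α} (hA : IsClosed A) (hs : s ∈ A) (ht : t ∈ A)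
    (hst : s ≤ t) (hU : IsOpen U) (hV : IsOpen V) (hUV : Disjoint U V) (hsU : s ∈ U) (htV : t ∈ V)
    (hcover : A ∩ Icc s t ⊆ U ∪ V) :
    ∃ u ∈ A ∩ U, ∃ v ∈ A ∩ V, u < v ∧ Disjoint A (Ioo u v) := by
  obtain ⟨u, ⟨⟨huA, hu⟩, huV⟩, hu_max⟩ :=
    ((isCompact_Icc.inter_left hA).diff hV).exists_isGreatest
      ⟨s, ⟨hs, left_mem_Icc.2 hst⟩, hUV.notMem_of_mem_left hsU⟩
  have huU : u ∈ U := (hcover ⟨huA, hu⟩).resolve_right huV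
  obtain ⟨v, ⟨⟨hvA, hv⟩, hvU⟩, hv_min⟩ :=
    ((isCompact_Icc.inter_left hA).diff hU).exists_isLeast
      ⟨t, ⟨ht, right_mem_Icc.2 hu.2⟩, hUV.notMem_of_mem_right htV⟩
  have hvV : v ∈ V := (hcover ⟨hvA, hu.1.trans hv.1, hv.2⟩).resolve_left hvU
  refine ⟨u, ⟨huA, huU⟩, v, ⟨hvA, hvV⟩, hv.1.lt_of_ne (hUV.ne_of_mem huU hvV), ?_⟩
  refine Set.disjoint_left.2 fun w hwA hw => ?_
  have hwst : w ∈ Icc s t := ⟨hu.1.trans hw.1.le, hw.2.le.trans hv.2⟩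
  rcases hcover ⟨hwA, hwst⟩ with hwU | hwV
  · exact hw.1.not_ge (hu_max ⟨⟨hwA, hwst⟩, hUV.notMem_of_mem_left hwU⟩)
  · exact hw.2.not_ge (hv_min ⟨⟨hwA, hw.1.le, hwst.2⟩, hUV.notMem_of_mem_right hwV⟩)

variable [CompleteLinearOrder α]

/-- A closed set `A` of times, containing the first and the last one, such that `f` takes equal
values at the two ends of each gap of `A`: one can follow `f` along `A` and skip the loops that
`f` performs during the gaps. -/
structure IsShortcut (f : α → X) (A : Set α) : Prop where
  isClosed : IsClosed A
  bot_mem : ⊥ ∈ A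
  top_mem : ⊤ ∈ A
  eq_of_gap : ∀ ⦃s⦄, s ∈ A → ∀ ⦃t⦄, t ∈ A → s < t → Disjoint A (Ioo s t) → f s = f t

variable {f : α → X} {A : Set α}

theorem isShortcut_univ [DenselyOrdered α] (f : α → X) : IsShortcut f univ where
  isClosed := isClosed_univ
  bot_mem := mem_univ ⊥
  top_mem := mem_univ ⊤
  eq_of_gap s _ t _ hst hgap := by
    obtain ⟨u, hu⟩ := exists_between hst
    exact (Set.disjoint_left.1 hgap (mem_univ u) hu).elim

theorem IsShortcut.sdiff_Ioo [OrderClosedTopology α] (hA : IsShortcut f A) {s t : α}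
    (hs : s ∈ A) (ht : t ∈ A) (hf : f s = f t) : IsShortcut f (A \ Ioo s t) where
  isClosed := hA.isClosed.sdiff isOpen_Ioo
  bot_mem := ⟨hA.bot_mem, fun h => not_lt_bot h.1⟩
  top_mem := ⟨hA.top_mem, fun h => not_top_lt h.2⟩
  eq_of_gap a ha b hb hab hgap := by
    by_cases hgapA : Disjoint A (Ioo a b)
    · exact hA.eq_of_gap ha.1 hb.1 hab hgapA
    obtain ⟨w, hwA, hw⟩ := Set.not_disjoint_iff.1 hgapA
    have hwst : w ∈ Ioo s t := by_contra fun h => Set.disjoint_left.1 hgap ⟨hwA, h⟩ hw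
    have has : a ≤ s := not_lt.1 fun h => ha.2 ⟨h, hw.1.trans hwst.2⟩
    have htb : t ≤ b := not_lt.1 fun h => hb.2 ⟨hwst.1.trans hw.2, h⟩
    have hsa : s ≤ a := not_lt.1 fun h =>
      Set.disjoint_left.1 hgap ⟨hs, fun h' => h'.1.false⟩ ⟨h, hwst.1.trans hw.2⟩
    have hbt : b ≤ t := not_lt.1 fun h =>
      Set.disjoint_left.1 hgap ⟨ht, fun h' => h'.2.false⟩ ⟨hw.1.trans hwst.2, h⟩
    rw [has.antisymm hsa, hbt.antisymm htb, hf]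

variable [OrderTopology α]

theorem isShortcut_sInter_of_directedOn [TopologicalSpace X] [T2Space X]
    (hf : Continuous f) {c : Set (Set α)} (hne : c.Nonempty) (hdir : DirectedOn (· ⊇ ·) c)
    (hc : ∀ A ∈ c, IsShortcut f A) :
    IsShortcut f (⋂₀ c) where
  isClosed := isClosed_sInter fun A hA => (hc A hA).isClosed
  bot_mem A hA := (hc A hA).bot_mem
  top_mem A hA := (hc A hA).top_mem
  eq_of_gap s hs t ht hst hgap := by
    by_contra hfst
    obtain ⟨U, V, hU, hV, hsU, htV, hUV⟩ := t2_separation hfst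
    have hO : IsOpen (f ⁻¹' U ∪ f ⁻¹' V ∪ (Icc s t)ᶜ) :=
      ((hU.preimage hf).union (hV.preimage hf)).union isClosed_Icc.isOpen_compl
    have sInter_subset : ⋂₀ c ⊆ f ⁻¹' U ∪ f ⁻¹' V ∪ (Icc s t)ᶜ := by
      intro w hw
      by_cases hwst : w ∈ Icc s t
      · rcases eq_endpoints_or_mem_Ioo_of_mem_Icc hwst with rfl | rfl | hwst
        · exact .inl (.inl hsU)
        · exact .inl (.inr htV)
        · exact (Set.disjoint_left.1 hgap hw hwst).elim
      · exact .inr hwst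
    -- By compactness some `A ∈ c` meets `Icc s t` only inside `f ⁻¹' U ∪ f ⁻¹' V`, and it has to
    -- jump from one of these two sets to the other across a gap.
    have := hne.to_subtype
    obtain ⟨⟨A, hAc⟩, hA⟩ := exists_subset_nhds_of_isCompact
      (directedOn_iff_directed.1 hdir) (fun A => (hc A A.2).isClosed.isCompact)
      fun w hw => hO.mem_nhds (sInter_subset (sInter_eq_iInter ▸ hw))
    obtain ⟨u, ⟨huA, huU⟩, v, ⟨hvA, hvV⟩, huv, hgapA⟩ := exists_gap_of_inter_Icc_subset_union
      (hc A hAc).isClosed (hs A hAc) (ht A hAc) hst.le (hU.preimage hf) (hV.preimage hf)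
      (hUV.preimage f) hsU htV fun w hw => (hA hw.1).resolve_right (not_not_intro hw.2)
    exact hUV.ne_of_mem huU hvV ((hc A hAc).eq_of_gap huA hvA huv hgapA)

theorem exists_minimal_isShortcut [DenselyOrdered α] [TopologicalSpace X] [T2Space X]
    (hf : Continuous f) : ∃ A, Minimal (IsShortcut f) A := by
  have exists_lower_bound (c : Set (Set α)) (hc : c ⊆ {A | IsShortcut f A})
      (hchain : IsChain (· ⊆ ·) c) (hne : c.Nonempty) :
      ∃ B ∈ {A | IsShortcut f A}, ∀ A ∈ c, B ⊆ A :=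
    have hdir : DirectedOn (· ⊇ ·) c := fun A hA B hB =>
      (hchain.total hA hB).elim (fun h => ⟨A, hA, subset_rfl, h⟩) fun h => ⟨B, hB, h, subset_rfl⟩
    ⟨⋂₀ c, isShortcut_sInter_of_directedOn hf hne hdir hc, fun _ => sInter_subset_of_mem⟩
  obtain ⟨A, -, hA⟩ := zorn_superset_nonempty _ exists_lower_bound univ (isShortcut_univ f)
  exact ⟨A, hA⟩

theorem disjoint_Ioo_of_minimal_isShortcut (hA : Minimal (IsShortcut f) A) {s t : α} (hs : s ∈ A)
    (ht : t ∈ A) (hf : f s = f t) : Disjoint A (Ioo s t) :=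
  Set.disjoint_left.2 fun _ hw =>
    (hA.le_of_le (hA.prop.sdiff_Ioo hs ht hf) sdiff_subset hw).2

theorem continuousWithinAt_sSup_inter_Iic (hA : IsClosed A) (t : α) :
    ContinuousWithinAt (fun u => sSup (A ∩ Iic u)) (Ici t) t := by
  have sSup_mono {u v : α} (huv : u ≤ v) : sSup (A ∩ Iic u) ≤ sSup (A ∩ Iic v) :=
    sSup_le_sSup (inter_subset_inter_right A (Iic_subset_Iic.2 huv))
  by_cases ht : t ∈ A
  · have sSup_eq : sSup (A ∩ Iic t) = t := IsGreatest.csSup_eq ⟨⟨ht, le_rfl⟩, fun _ h => h.2⟩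
    rw [ContinuousWithinAt, sSup_eq]
    refine tendsto_of_tendsto_of_tendsto_of_le_of_le' tendsto_const_nhds
      (tendsto_id.mono_left nhdsWithin_le_nhds) ?_ (.of_forall fun u => sSup_le fun _ h => h.2)
    filter_upwards [self_mem_nhdsWithin] with u hu
    exact sSup_eq.ge.trans (sSup_mono hu)
  · have eventually_gap : ∀ᶠ u in 𝓝[≥] t, Icc t u ⊆ Aᶜ :=
      ((tendsto_const_nhds.Icc tendsto_id).eventually
        (eventually_smallSets_subset.2 (hA.isOpen_compl.mem_nhds ht))).filter_mono
          nhdsWithin_le_nhds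
    refine (continuousWithinAt_const (b := sSup (A ∩ Iic t))).congr_of_eventuallyEq ?_ rfl
    filter_upwards [eventually_gap, self_mem_nhdsWithin] with u hu htu
    refine le_antisymm (sSup_le_sSup fun w hw => ⟨hw.1, ?_⟩) (sSup_mono htu)
    exact le_of_not_gt fun htw => hu ⟨htw.le, hw.2⟩ hw.1

theorem IsShortcut.apply_sSup_inter_Iic (hA : IsShortcut f A) (t : α) :
    f (sSup (A ∩ Iic t)) = f (sInf (A ∩ Ici t)) := by
  have hl : sSup (A ∩ Iic t) ∈ A ∩ Iic t :=
    (hA.isClosed.inter isClosed_Iic).isCompact.sSup_mem ⟨⊥, hA.bot_mem, bot_le⟩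
  have hr : sInf (A ∩ Ici t) ∈ A ∩ Ici t :=
    (hA.isClosed.inter isClosed_Ici).isCompact.sInf_mem ⟨⊤, hA.top_mem, le_top⟩
  rcases (hl.2.trans hr.2).eq_or_lt with h | h
  · rw [h]
  · refine hA.eq_of_gap hl.1 hr.1 h (Set.disjoint_left.2 fun w hwA hw => ?_)
    rcases le_total w t with hwt | htw
    · exact hw.1.not_ge (le_sSup ⟨hwA, hwt⟩)
    · exact hw.2.not_ge (sInf_le ⟨hwA, htw⟩)

theorem IsShortcut.continuous_comp_sSup_inter_Iic [TopologicalSpace X] (hA : IsShortcut f A)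
    (hf : Continuous f) : Continuous fun t => f (sSup (A ∩ Iic t)) := by
  -- `sSup (A ∩ Iic t)` is right continuous in `t` and `sInf (A ∩ Ici t)` is left continuous, while
  -- `f` does not distinguish them.
  refine continuous_iff_continuousAt.2 fun t => continuousAt_iff_continuous_left_right.2 ⟨?_, ?_⟩
  · simp only [hA.apply_sSup_inter_Iic]
    exact hf.continuousAt.comp_continuousWithinAt
      (continuousWithinAt_sSup_inter_Iic (α := αᵒᵈ) hA.isClosed t)
  · exact hf.continuousAt.comp_continuousWithinAt (continuousWithinAt_sSup_inter_Iic hA.isClosed t)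

theorem exists_continuous_ordConnected_fibers [DenselyOrdered α] [TopologicalSpace X] [T2Space X]
    (hf : Continuous f) :
    ∃ g : α → X, Continuous g ∧ (∀ x, (g ⁻¹' {x}).OrdConnected) ∧ g ⊥ = f ⊥ ∧ g ⊤ = f ⊤ ∧
      range g ⊆ range f := by
  obtain ⟨A, hA⟩ := exists_minimal_isShortcut hf
  let r (t : α) : α := sSup (A ∩ Iic t)
  have r_mem (t : α) : r t ∈ A ∩ Iic t :=
    (hA.prop.isClosed.inter isClosed_Iic).isCompact.sSup_mem ⟨⊥, hA.prop.bot_mem, bot_le⟩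
  have r_mono : Monotone r := fun s t hst =>
    sSup_le_sSup (inter_subset_inter_right A (Iic_subset_Iic.2 hst))
  have r_top : r ⊤ = ⊤ := top_le_iff.1 (le_sSup ⟨hA.prop.top_mem, le_rfl⟩)
  refine ⟨f ∘ r, hA.prop.continuous_comp_sSup_inter_Iic hf, fun x => ⟨?_⟩,
    congrArg f (le_bot_iff.1 (r_mem ⊥).2), congrArg f r_top, range_comp_subset_range r f⟩
  intro s hs t ht u hu
  have hgap : Disjoint A (Ioo (r s) (r t)) :=
    disjoint_Ioo_of_minimal_isShortcut hA (r_mem s).1 (r_mem t).1 (hs.trans ht.symm)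
  rcases eq_endpoints_or_mem_Ioo_of_mem_Icc ⟨r_mono hu.1, r_mono hu.2⟩ with h | h | h
  · exact (congrArg f h).trans hs
  · exact (congrArg f h).trans ht
  · exact (Set.disjoint_left.1 hgap (r_mem u).1 h).elim

end Shortcuts

section Arcs

variable {α X : Type*}

theorem notMem_image_Iic_of_ordConnected_fibers [Preorder α] {g : α → X}
    (hfib : ∀ x, (g ⁻¹' {x}).OrdConnected) {s t : α} (hst : s ≤ t) (hne : g s ≠ g t) :
    g t ∉ g '' Iic s := by
  rintro ⟨u, hus, hut⟩
  exact hne ((hfib (g t)).out hut rfl ⟨hus, hst⟩)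

theorem image_Iic_eq_of_ordConnected_fibers [LinearOrder α] {g : α → X}
    (hfib : ∀ x, (g ⁻¹' {x}).OrdConnected) {s t : α} (hst : s ≤ t) (h : g s = g t) :
    g '' Iic s = g '' Iic t := by
  refine (image_mono (Iic_subset_Iic.2 hst)).antisymm ?_
  rintro _ ⟨u, hut, rfl⟩
  rcases le_total u s with hus | hsu
  · exact mem_image_of_mem g hus
  · exact ⟨s, le_rfl, ((hfib (g t)).out h rfl ⟨hsu, hut⟩ : g u = g t) ▸ h⟩

theorem continuous_infDist_image_Iic [LinearOrder α] [TopologicalSpace α] [OrderClosedTopology α]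
    [CompactSpace α] [PseudoMetricSpace X] {g : α → X} (hg : Continuous g) :
    Continuous fun p : X × α => Metric.infDist p.1 (g '' Iic p.2) := by
  have infDist_eq (p : X × α) : Metric.infDist p.1 (g '' Iic p.2) =
      sInf ((fun u => dist p.1 (g (min u p.2))) '' univ) := by
    have image_eq : g '' Iic p.2 = range fun u => g (min u p.2) := by
      ext x
      constructor
      · rintro ⟨u, hu, rfl⟩
        exact ⟨u, congrArg g (min_eq_left hu)⟩
      · rintro ⟨u, rfl⟩
        exact ⟨_, min_le_right u p.2, rfl⟩
    rw [Metric.infDist_eq_iInf, image_eq, ← sInf_image', ← range_comp, image_univ]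
    rfl
  simp only [infDist_eq]
  exact isCompact_univ.continuous_sInf (by unfold HasUncurry.uncurry; fun_prop)

/-- The size of the initial segment `g '' Iic t` of a path `g`: up to an additive constant, a
Whitney map, which strictly increases along an increasing sequence of compact sets. -/
noncomputable def initialSize [PseudoMetricSpace X] (g : I → X) (t : I) : ℝ :=
  -∫ q in (0 : ℝ)..1, Metric.infDist (g (projIcc 0 1 zero_le_one q)) (g '' Iic t)

theorem continuous_infDist_projIcc_image_Iic [PseudoMetricSpace X] {g : I → X} (hg : Continuous g) :
    Continuous (uncurry fun (t : I) (q : ℝ) =>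
      Metric.infDist (g (projIcc 0 1 zero_le_one q)) (g '' Iic t)) :=
  (continuous_infDist_image_Iic hg).comp₂ (hg.comp (continuous_projIcc.comp continuous_snd))
    continuous_fst

theorem continuous_initialSize [PseudoMetricSpace X] {g : I → X} (hg : Continuous g) :
    Continuous (initialSize g) :=
  (intervalIntegral.continuous_parametric_intervalIntegral_of_continuous'
    (continuous_infDist_projIcc_image_Iic hg) 0 1).neg

theorem monotone_initialSize [PseudoMetricSpace X] {g : I → X} (hg : Continuous g) :
    Monotone (initialSize g) := by
  have hcont := continuous_infDist_projIcc_image_Iic hg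
  intro s t hst
  exact neg_le_neg (intervalIntegral.integral_mono zero_le_one
    ((hcont.uncurry_left t).intervalIntegrable 0 1) ((hcont.uncurry_left s).intervalIntegrable 0 1)
    fun q => Metric.infDist_le_infDist_of_subset (image_mono (Iic_subset_Iic.2 hst))
      ⟨g s, mem_image_of_mem g self_mem_Iic⟩)

theorem initialSize_lt_of_notMem [MetricSpace X] {g : I → X} (hg : Continuous g) {s t : I}
    (hst : s ≤ t) (h : g t ∉ g '' Iic s) : initialSize g s < initialSize g t := by
  have hcont := continuous_infDist_projIcc_image_Iic hg
  have hne : (g '' Iic s).Nonempty := ⟨g s, mem_image_of_mem g self_mem_Iic⟩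
  have hclosed : IsClosed (g '' Iic s) := (isClosed_Iic.isCompact.image hg).isClosed
  refine neg_lt_neg (intervalIntegral.integral_lt_integral_of_continuousOn_of_le_of_exists_lt
    zero_lt_one (hcont.uncurry_left t).continuousOn (hcont.uncurry_left s).continuousOn
    (fun q _ => Metric.infDist_le_infDist_of_subset (image_mono (Iic_subset_Iic.2 hst)) hne)
    ⟨t, t.2, ?_⟩)
  rw [projIcc_val, Metric.infDist_zero_of_mem (mem_image_of_mem g self_mem_Iic)]
  exact (hclosed.notMem_iff_infDist_pos hne).1 h

theorem initialSize_eq_iff_of_ordConnected_fibers [MetricSpace X] {g : I → X} (hg : Continuous g)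
    (hfib : ∀ x, (g ⁻¹' {x}).OrdConnected) {s t : I} :
    initialSize g s = initialSize g t ↔ g s = g t := by
  wlog hst : s ≤ t generalizing s t
  · rw [eq_comm, this (le_of_not_ge hst), eq_comm]
  refine ⟨fun h => by_contra fun hne => ?_, fun h => ?_⟩
  · exact (initialSize_lt_of_notMem hg hst
      (notMem_image_Iic_of_ordConnected_fibers hfib hst hne)).ne h
  · rw [initialSize, initialSize, image_Iic_eq_of_ordConnected_fibers hfib hst h]

theorem joinedByArcIn_range_of_monotone [TopologicalSpace X] {g : I → X} (hg : Continuous g)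
    {φ : I → ℝ} (hφ : Continuous φ) (hmono : Monotone φ) (hφg : ∀ {s t}, φ s = φ t ↔ g s = g t)
    (hne : g 0 ≠ g 1) : JoinedByArcIn (range g) (g 0) (g 1) := by
  have hlt : φ 0 < φ 1 := (hmono zero_le_one).lt_of_ne fun h => hne (hφg.1 h)
  let ψ : C(I, I) := ⟨fun t => iccHomeoI (φ 0) (φ 1) hlt ⟨φ t, hmono nonneg', hmono le_one'⟩,
    (iccHomeoI _ _ hlt).continuous.comp (hφ.subtype_mk _)⟩
  have hψ0 : ψ 0 = 0 := by ext; simp [ψ]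
  have hψ1 : ψ 1 = 1 := by ext; simp [ψ, div_self (sub_pos.2 hlt).ne']
  have hψg {s t : I} : ψ s = ψ t ↔ g s = g t := by
    rw [← hφg]
    exact (iccHomeoI _ _ hlt).injective.eq_iff.trans Subtype.mk_eq_mk
  have hψ_surj : Surjective ψ := fun u =>
    mem_range_of_exists_le_of_exists_ge ψ.continuous ⟨0, hψ0.trans_le nonneg'⟩
      ⟨1, le_one'.trans_eq hψ1.symm⟩
  have hψ_quot : IsQuotientMap ψ := .of_surjective_continuous hψ_surj ψ.continuous
  obtain ⟨γ, hγψ⟩ : ∃ γ : C(I, X), γ.comp ψ = ⟨g, hg⟩ :=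
    ⟨hψ_quot.lift ⟨g, hg⟩ fun _ _ h => hψg.1 h, hψ_quot.lift_comp _ _⟩
  have hγ (t : I) : γ (ψ t) = g t := DFunLike.congr_fun hγψ t
  refine ⟨γ, γ.continuous, hψ_surj.forall₂.2 fun s t h => ?_, ?_, ?_, ?_⟩
  · rw [hγ, hγ] at h
    exact hψg.2 h
  · rw [← hγ, hψ0]
  · rw [← hγ, hψ1]
  · rw [← hψ_surj.range_comp, range_subset_iff]
    exact fun t => ⟨t, (hγ t).symm⟩

theorem joinedByArcIn_of_joinedIn [TopologicalSpace X] [TopologicalSpace.MetrizableSpace X]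
    {S : Set X} {a b : X} (h : JoinedIn S a b) (hab : a ≠ b) : JoinedByArcIn S a b := by
  let := TopologicalSpace.metrizableSpaceMetric X
  obtain ⟨f, hfS⟩ := h
  obtain ⟨g, hg, hfib, h0, h1, hgf⟩ := exists_continuous_ordConnected_fibers f.continuous
  have hg0 : g 0 = a := h0.trans f.source
  have hg1 : g 1 = b := h1.trans f.target
  obtain ⟨γ, hγ, hγ_inj, hγ0, hγ1, hγg⟩ := joinedByArcIn_range_of_monotone hg
    (continuous_initialSize hg) (monotone_initialSize hg)
    (initialSize_eq_iff_of_ordConnected_fibers hg hfib) (by rwa [hg0, hg1])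
  exact ⟨γ, hγ, hγ_inj, hγ0.trans hg0, hγ1.trans hg1,
    hγg.trans (hgf.trans (range_subset_iff.2 hfS))⟩

end Arcs

theorem component_of_punctured_space_arcwise_connected_general {X : Type*} [TopologicalSpace X]
    [TopologicalSpace.IsCompletelyMetrizableSpace X] [LocallyConnectedSpace X] {U : Set X}
    (hU : IsOpen U) (y : X) :
    IsOpen (connectedComponentIn U y) ∧ ∀ a ∈ connectedComponentIn U y,
      ∀ b ∈ connectedComponentIn U y, a ≠ b → JoinedByArcIn (connectedComponentIn U y) a b := by
  have := locallyPathConnectedSpace_of_isCompletelyMetrizableSpace (X := X)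
  have hopen : IsOpen (connectedComponentIn U y) := hU.connectedComponentIn
  refine ⟨hopen, fun a ha b hb hab => joinedByArcIn_of_joinedIn ?_ hab⟩
  have hconn : IsConnected (connectedComponentIn U y) :=
    ⟨⟨a, ha⟩, isPreconnected_connectedComponentIn⟩
  exact (hopen.isConnected_iff_isPathConnected.1 hconn).joinedIn a ha b hb

/-- In a compact, connected, locally connected metric space, every connected
component of the complement of a point is open and arcwise connected. -/
theorem component_of_punctured_space_arcwise_connected {X : Type*} [MetricSpace X]
    [CompactSpace X] [ConnectedSpace X] [LocallyConnectedSpace X] (x : X) (C : Set X)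
    (hC : ∃ y, y ∈ ({x}ᶜ : Set X) ∧ C = connectedComponentIn ({x}ᶜ : Set X) y) :
    IsOpen C ∧ ∀ a ∈ C, ∀ b ∈ C, a ≠ b → JoinedByArcIn C a b := by
  obtain ⟨y, -, rfl⟩ := hC
  exact component_of_punctured_space_arcwise_connected_general isOpen_compl_singleton y
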